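/- For each k ≥ 2, the graph Θ(2,2,2k) satisfies χ_ℓ(Θ(2,2,2k)) = χ(Θ(2,2,2k)) = 2 (it is chromatic-choosable), yet P_ℓ(Θ(2,2,2k),2) = 1 < 2 = P(Θ(2,2,2k),2); in particular Θ(2,2,2k) is not weakly enumeratively chromatic-choosable. -/

import Mathlib

/-!
Write `u = 0`, `v = 1`, `a = 2`, `b = 3` for the ends and the middle vertices of the two short paths,
and `z₁, …, z_{2k-1}` for the interior of the long path.

*Choosability.* Fix a `2`-assignment. A pair `(c, d) ∈ L(u) × L(v)` extends to a proper coloring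
unless it is blocked by `a`, by `b` or by the long path. The vertex `a` blocks `(c, d)` only if
`L(a) = {c, d}` with `c ≠ d`. The long path blocks `(c, d)` only if the color `c` at `u` forces the
color `d` at `z_{2k-1}`. If two different colors of `u` both force a color at `z_{2k-1}`, then
the forced colors are these two colors interchanged (`reach_pair`), the number of steps being odd.
Hence if one of the three obstructions blocks two pairs, these are `(p, q)` and `(q, p)`,
and `L(u) = L(v) = {p, q}`. So if `L(u) ≠ L(v)`, at most three of the four pairs
are blocked; if `L(u) = L(v)`, then `a` and `b` do not block diagonal pairs and the long path blocks at
most one of them (`exists_pair`).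

*One coloring only.* Take `L(u) = L(a) = {1,2}`, `L(v) = {1,3}`, `L(b) = {2,3}`,
`L(z_i) = {1,2}` for `i ≤ 2k-3`, `L(z_{2k-2}) = {2,3}` and `L(z_{2k-1}) = {1,3}`. If `u` gets `2`,
then `a` gets `1` and `b` gets `3`, so that no color is left for `v`. If `u` gets `1`, then every other
color is forced: `a` gets `2`, the `z_i` alternate between `2` and `1` up to `z_{2k-3}`, which gets `2`, then
`z_{2k-2}` gets `3`, `z_{2k-1}` gets `1`, `v` gets `3` and `b` gets `2`.

*Chromatic polynomial.* The graph is connected and bipartite, so a proper coloring with colors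
`1, 2` is determined by the color of `u`.
-/

/-- A proper `L`-coloring of `G`: each vertex gets a color from its list,
and adjacent vertices get different colors. -/
def IsProperListColoring {V : Type*} (G : SimpleGraph V) (L : V → Finset ℕ) (f : V → ℕ) : Prop :=
  (∀ v, f v ∈ L v) ∧ ∀ ⦃u w : V⦄, G.Adj u w → f u ≠ f w

/-- `P(G,L)`: the number of proper `L`-colorings of `G`. -/
noncomputable def numListColorings {V : Type*} (G : SimpleGraph V) (L : V → Finset ℕ) : ℕ :=
  Nat.card {f : V → ℕ // IsProperListColoring G L f}

/-- The chromatic polynomial `P(G,m)`: the number of proper colorings using colors from `{1,…,m}`. -/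
noncomputable def chromPoly {V : Type*} (G : SimpleGraph V) (m : ℕ) : ℕ :=
  numListColorings G (fun _ => Finset.Icc 1 m)

/-- The list color function `P_ℓ(G,m)`: the minimum number of proper `L`-colorings
over all `m`-assignments `L`. -/
noncomputable def listColorFn {V : Type*} (G : SimpleGraph V) (m : ℕ) : ℕ :=
  sInf {n | ∃ L : V → Finset ℕ, (∀ v, (L v).card = m) ∧ numListColorings G L = n}

/-- The list chromatic number `χ_ℓ(G)`: the least `m` such that `G` has a proper
`L`-coloring for every `m`-assignment `L`. -/
noncomputable def listChromNum {V : Type*} (G : SimpleGraph V) : ℕ :=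
  sInf {m | ∀ L : V → Finset ℕ, (∀ v, (L v).card = m) →
    ∃ f : V → ℕ, IsProperListColoring G L f}

/-- The generalized theta graph `Θ(2,2,2k)` on vertex set `Fin (2k+3)`:
`u = 0`, `v = 1`, the internal vertices of the two paths of length 2 are `2` and `3`,
and the internal vertices `z_1, …, z_{2k-1}` of the path of length `2k` are `4, …, 2k+2`. -/
def thetaGraph (k : ℕ) : SimpleGraph (Fin (2*k+3)) :=
  SimpleGraph.fromRel (fun a b =>
    (a.val = 0 ∧ b.val = 2) ∨ (a.val = 2 ∧ b.val = 1) ∨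
    (a.val = 0 ∧ b.val = 3) ∨ (a.val = 3 ∧ b.val = 1) ∨
    (a.val = 0 ∧ b.val = 4) ∨
    (4 ≤ a.val ∧ b.val = a.val + 1 ∧ a.val + 1 ≤ 2*k+2) ∨
    (a.val = 2*k+2 ∧ b.val = 1))

/-! ### Colorings of the theta graph through functions on `ℕ` -/

lemma proper_iff (k : ℕ) (hk : 2 ≤ k) (l : ℕ → Finset ℕ) (g : ℕ → ℕ) :
    IsProperListColoring (thetaGraph k) (fun v => l v.val) (fun v => g v.val) ↔
      (∀ n < 2*k+3, g n ∈ l n) ∧ g 0 ≠ g 2 ∧ g 2 ≠ g 1 ∧ g 0 ≠ g 3 ∧ g 3 ≠ g 1 ∧ g 0 ≠ g 4 ∧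
      (∀ n, 4 ≤ n → n + 1 ≤ 2*k+2 → g n ≠ g (n+1)) ∧ g (2*k+2) ≠ g 1 := by
  constructor
  · rintro ⟨h1, h2⟩
    have key : ∀ m n (hm : m < 2*k+3) (hn : n < 2*k+3), m ≠ n →
        ((m = 0 ∧ n = 2) ∨ (m = 2 ∧ n = 1) ∨ (m = 0 ∧ n = 3) ∨ (m = 3 ∧ n = 1) ∨
          (m = 0 ∧ n = 4) ∨ (4 ≤ m ∧ n = m + 1 ∧ m + 1 ≤ 2*k+2) ∨ (m = 2*k+2 ∧ n = 1)) →
        g m ≠ g n := by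
      intro m n hm hn hmn h
      refine @h2 ⟨m, hm⟩ ⟨n, hn⟩ ?_
      rw [thetaGraph, SimpleGraph.fromRel_adj]
      exact ⟨fun h => hmn (Fin.mk.inj_iff.1 h), Or.inl h⟩
    refine ⟨fun n hn => h1 ⟨n, hn⟩, ?_, ?_, ?_, ?_, ?_, fun n h4 hn => ?_, ?_⟩ <;>
      apply key <;> omega
  · rintro ⟨h1, h02, h21, h03, h31, h04, hz, hl⟩
    refine ⟨fun v => h1 v.val v.isLt, ?_⟩
    have key : ∀ m n : ℕ,
        ((m = 0 ∧ n = 2) ∨ (m = 2 ∧ n = 1) ∨ (m = 0 ∧ n = 3) ∨ (m = 3 ∧ n = 1) ∨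
          (m = 0 ∧ n = 4) ∨ (4 ≤ m ∧ n = m + 1 ∧ m + 1 ≤ 2*k+2) ∨ (m = 2*k+2 ∧ n = 1)) →
        g m ≠ g n := by
      rintro m n (⟨rfl, rfl⟩ | ⟨rfl, rfl⟩ | ⟨rfl, rfl⟩ | ⟨rfl, rfl⟩ | ⟨rfl, rfl⟩ |
        ⟨h, rfl, h'⟩ | ⟨rfl, rfl⟩)
      all_goals first | assumption | exact hz _ h h'
    intro x y hxy
    rw [thetaGraph, SimpleGraph.fromRel_adj] at hxy
    rcases hxy.2 with h | h
    · exact key _ _ h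
    · exact (key _ _ h).symm

lemma exists_ext {α : Type*} [Inhabited α] {N : ℕ} (f : Fin N → α) :
    ∃ g : ℕ → α, f = fun v => g v.val :=
  ⟨fun n => if h : n < N then f ⟨n, h⟩ else default, by ext v; simp⟩

/-! ### Forcing along a path -/

/-- The colors available at the `n`-th vertex of a path `z₀ z₁ z₂ …` with lists `l 1, l 2, …`
at `z₁, z₂, …`, among proper list colorings that give `z₀` the color `c`. -/
def reach (l : ℕ → Finset ℕ) (c : ℕ) : ℕ → Finset ℕ
  | 0 => {c}
  | n + 1 => (l (n + 1)).filter fun d => ∃ e ∈ reach l c n, e ≠ d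

lemma exists_path (l : ℕ → Finset ℕ) (c n d : ℕ) (hd : d ∈ reach l c n) :
    ∃ g : ℕ → ℕ, g 0 = c ∧ g n = d ∧ (∀ i, 1 ≤ i → i ≤ n → g i ∈ l i) ∧
      ∀ i < n, g i ≠ g (i + 1) := by
  induction n generalizing d with
  | zero =>
    refine ⟨fun _ => c, rfl, ?_, ?_, ?_⟩
    · simpa [reach] using (Finset.mem_singleton.1 hd).symm
    all_goals intros; omega
  | succ n ih =>
    obtain ⟨hdl, e, he, hed⟩ := Finset.mem_filter.1 hd
    obtain ⟨g, h0, hn, hl, hne⟩ := ih e he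
    refine ⟨fun i => if i ≤ n then g i else d, by simp [h0], by simp, ?_, ?_⟩
    · intro i hi hin
      by_cases h : i ≤ n
      · simpa [h] using hl i hi h
      · obtain rfl : i = n + 1 := by omega
        simpa using hdl
    · intro i hi
      by_cases h : i + 1 ≤ n
      · simpa [h, show i ≤ n by omega] using hne i h
      · obtain rfl : i = n := by omega
        simpa [hn] using hed

lemma reach_nonempty (l : ℕ → Finset ℕ) (hl : ∀ n, (l n).card = 2) (c n : ℕ) :
    (reach l c n).Nonempty := by
  induction n with
  | zero => exact ⟨c, by simp [reach]⟩
  | succ n ih =>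
    obtain ⟨e, he⟩ := ih
    obtain ⟨d, hd, hde⟩ := Finset.exists_mem_ne (by rw [hl]; omega : 1 < (l (n+1)).card) e
    exact ⟨d, Finset.mem_filter.2 ⟨hd, e, he, hde.symm⟩⟩

/-- A color forced at a vertex comes from a color forced at its predecessor, and the list of the
vertex consists of these two colors. -/
lemma reach_succ_singleton (l : ℕ → Finset ℕ) (hl : ∀ n, (l n).card = 2) (c n d : ℕ)
    (h : ∀ x ∈ reach l c (n + 1), x = d) :
    ∃ e, (∀ x ∈ reach l c n, x = e) ∧ e ≠ d ∧ l (n + 1) = {e, d} := by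
  have key : ∀ e ∈ reach l c n, ∀ x ∈ l (n + 1), x = e ∨ x = d := by
    intro e he x hx
    by_contra! hne
    exact hne.2 (h x (Finset.mem_filter.2 ⟨hx, e, he, hne.1.symm⟩))
  obtain ⟨p, q, hpq, hL⟩ := Finset.card_eq_two.1 (hl (n + 1))
  obtain ⟨e, he⟩ := reach_nonempty l hl c n
  have h2 : ∀ e ∈ reach l c n, (p = e ∨ p = d) ∧ (q = e ∨ q = d) := fun e he =>
    ⟨key e he p (by simp [hL]), key e he q (by simp [hL])⟩
  refine ⟨e, fun x hx => ?_, ?_, ?_⟩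
  · have := h2 x hx
    have := h2 e he
    omega
  · have := h2 e he
    omega
  · rw [hL]
    rcases h2 e he with ⟨rfl | rfl, rfl | rfl⟩
    all_goals first | exact absurd rfl hpq | rfl | exact Finset.pair_comm _ _

/-- If two different start colors both force a color after `n` steps, then the forced colors
are the start colors, kept for even `n` and interchanged for odd `n`. -/
lemma reach_pair (l : ℕ → Finset ℕ) (hl : ∀ n, (l n).card = 2) (c c' : ℕ) (hc : c ≠ c') (n : ℕ) :
    ∀ d d', (∀ x ∈ reach l c n, x = d) → (∀ x ∈ reach l c' n, x = d') →
      (n % 2 = 0 ∧ d = c ∧ d' = c') ∨ (n % 2 = 1 ∧ d = c' ∧ d' = c) := by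
  induction n with
  | zero =>
    intro d d' h h'
    have := h c (by simp [reach])
    have := h' c' (by simp [reach])
    omega
  | succ n ih =>
    intro d d' h h'
    obtain ⟨e, he, hed, hL⟩ := reach_succ_singleton l hl c n d h
    obtain ⟨e', he', hed', hL'⟩ := reach_succ_singleton l hl c' n d' h'
    have h1 : e ∈ ({e', d'} : Finset ℕ) := by rw [← hL', hL]; simp
    have h2 : e' ∈ ({e, d} : Finset ℕ) := by rw [← hL, hL']; simp
    simp only [Finset.mem_insert, Finset.mem_singleton] at h1 h2
    have := ih e e' he he'
    omega

/-! ### Choosability -/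

/-- If the middle vertex of a path of length `2`, with list `A`, cannot be colored when the ends have
the colors `c` and `d`, then these colors are different and make up `A`. -/
lemma middle_blocked (A : Finset ℕ) (hA : A.card = 2) (c d : ℕ)
    (h : ¬ ∃ x ∈ A, x ≠ c ∧ x ≠ d) : c ≠ d ∧ A = {c, d} := by
  push Not at h
  obtain ⟨p, q, hpq, rfl⟩ := Finset.card_eq_two.1 hA
  have h1 := h p (by simp)
  have h2 := h q (by simp)
  have hcd : c ≠ d := by omega
  refine ⟨hcd, ?_⟩
  have : (p = c ∧ q = d) ∨ (p = d ∧ q = c) := by omega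
  rcases this with ⟨rfl, rfl⟩ | ⟨rfl, rfl⟩
  · rfl
  · exact Finset.pair_comm _ _

lemma middle_blocked_pair (A : Finset ℕ) (hA : A.card = 2) (c d c' d' : ℕ)
    (h : ¬ ∃ x ∈ A, x ≠ c ∧ x ≠ d) (h' : ¬ ∃ x ∈ A, x ≠ c' ∧ x ≠ d') :
    (c = c' ∧ d = d') ∨ (c = d' ∧ d = c' ∧ c ≠ d) := by
  obtain ⟨hcd, hA1⟩ := middle_blocked A hA c d h
  obtain ⟨hcd', hA2⟩ := middle_blocked A hA c' d' h'
  have h1 : c ∈ ({c', d'} : Finset ℕ) := by rw [← hA2, hA1]; simp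
  have h2 : d ∈ ({c', d'} : Finset ℕ) := by rw [← hA2, hA1]; simp
  simp only [Finset.mem_insert, Finset.mem_singleton] at h1 h2
  omega

lemma path_blocked_pair (l : ℕ → Finset ℕ) (hl : ∀ n, (l n).card = 2) (n : ℕ) (hn : n % 2 = 1)
    (c d c' d' : ℕ) (h : ∀ x ∈ reach l c n, x = d) (h' : ∀ x ∈ reach l c' n, x = d') :
    (c = c' ∧ d = d') ∨ (c = d' ∧ d = c' ∧ c ≠ d) := by
  by_cases hc : c = c'
  · subst hc
    obtain ⟨e, he⟩ := reach_nonempty l hl c n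
    exact Or.inl ⟨rfl, (h e he).symm.trans (h' e he)⟩
  · have := reach_pair l hl c c' hc n d d' h h'
    omega

/-- Some choice of colors at the two ends is blocked neither by the middle vertices, with lists `A`
and `B`, nor by the path with an odd number `n` of inner vertices. -/
lemma exists_pair (U W A B : Finset ℕ) (hU : U.card = 2) (hW : W.card = 2) (hA : A.card = 2)
    (hB : B.card = 2) (l : ℕ → Finset ℕ) (hl : ∀ n, (l n).card = 2) (n : ℕ) (hn : n % 2 = 1) :
    ∃ c ∈ U, ∃ d ∈ W, (∃ x ∈ A, x ≠ c ∧ x ≠ d) ∧ (∃ x ∈ B, x ≠ c ∧ x ≠ d) ∧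
      ∃ x ∈ reach l c n, x ≠ d := by
  classical
  by_contra! hcon
  have cover : ∀ c ∈ U, ∀ d ∈ W, (¬ ∃ x ∈ A, x ≠ c ∧ x ≠ d) ∨ (¬ ∃ x ∈ B, x ≠ c ∧ x ≠ d) ∨
      ∀ x ∈ reach l c n, x = d := by
    intro c hc d hd
    by_cases h1 : ∃ x ∈ A, x ≠ c ∧ x ≠ d
    · by_cases h2 : ∃ x ∈ B, x ≠ c ∧ x ≠ d
      · exact Or.inr (Or.inr (hcon c hc d hd h1 h2))
      · exact Or.inr (Or.inl h2)
    · exact Or.inl h1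
  by_cases hUW : U = W
  · -- Diagonal pairs can be blocked by the long path only, and it blocks at most one of them.
    subst hUW
    obtain ⟨p, q, hpq, rfl⟩ := Finset.card_eq_two.1 hU
    have diag : ∀ c ∈ ({p, q} : Finset ℕ), ∀ x ∈ reach l c n, x = c := by
      intro c hc
      rcases cover c hc c hc with h | h | h
      · exact absurd rfl (middle_blocked A hA c c h).1
      · exact absurd rfl (middle_blocked B hB c c h).1
      · exact h
    have := path_blocked_pair l hl n hn p p q q (diag p (by simp)) (diag q (by simp))
    omega
  · -- Each of the three obstructions blocks at most one of the four pairs.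
    have small : ∀ (K : ℕ × ℕ → Prop) [DecidablePred K], (∀ c d c' d', K (c, d) → K (c', d') →
        (c = c' ∧ d = d') ∨ (c = d' ∧ d = c' ∧ c ≠ d)) → ((U ×ˢ W).filter K).card ≤ 1 := by
      intro K _ hK
      rw [Finset.card_le_one]
      rintro ⟨c, d⟩ h ⟨c', d'⟩ h'
      simp only [Finset.mem_filter, Finset.mem_product] at h h'
      rcases hK c d c' d' h.2 h'.2 with ⟨rfl, rfl⟩ | ⟨rfl, rfl, hcd⟩
      · rfl
      · exfalso
        apply hUW
        have e1 : ({c, d} : Finset ℕ) = U := by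
          apply Finset.eq_of_subset_of_card_le
          · simp [Finset.insert_subset_iff, h.1.1, h'.1.1]
          · rw [hU, Finset.card_pair hcd]
        have e2 : ({c, d} : Finset ℕ) = W := by
          apply Finset.eq_of_subset_of_card_le
          · simp [Finset.insert_subset_iff, h.1.2, h'.1.2]
          · rw [hW, Finset.card_pair hcd]
        rw [← e1, ← e2]
    have s1 := small (fun P => ¬ ∃ x ∈ A, x ≠ P.1 ∧ x ≠ P.2)
      (fun c d c' d' => middle_blocked_pair A hA c d c' d')
    have s2 := small (fun P => ¬ ∃ x ∈ B, x ≠ P.1 ∧ x ≠ P.2)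
      (fun c d c' d' => middle_blocked_pair B hB c d c' d')
    have s3 := small (fun P => ∀ x ∈ reach l P.1 n, x = P.2)
      (fun c d c' d' => path_blocked_pair l hl n hn c d c' d')
    have hsub : U ×ˢ W ⊆ (U ×ˢ W).filter (fun P => ¬ ∃ x ∈ A, x ≠ P.1 ∧ x ≠ P.2) ∪
        ((U ×ˢ W).filter (fun P => ¬ ∃ x ∈ B, x ≠ P.1 ∧ x ≠ P.2) ∪
          (U ×ˢ W).filter (fun P => ∀ x ∈ reach l P.1 n, x = P.2)) := by
      rintro ⟨c, d⟩ h
      have h' := Finset.mem_product.1 h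
      simp only [Finset.mem_union, Finset.mem_filter]
      rcases cover c h'.1 d h'.2 with h1 | h1 | h1
      · exact Or.inl ⟨h, h1⟩
      · exact Or.inr (Or.inl ⟨h, h1⟩)
      · exact Or.inr (Or.inr ⟨h, h1⟩)
    have hcard := Finset.card_le_card hsub
    have u1 := hcard.trans (Finset.card_union_le _ _)
    have u2 := Finset.card_union_le ((U ×ˢ W).filter (fun P => ¬ ∃ x ∈ B, x ≠ P.1 ∧ x ≠ P.2))
      ((U ×ˢ W).filter (fun P => ∀ x ∈ reach l P.1 n, x = P.2))
    rw [Finset.card_product, hU, hW] at u1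
    omega

lemma theta_choosable (k : ℕ) (hk : 2 ≤ k) (L : Fin (2*k+3) → Finset ℕ)
    (hL : ∀ v, (L v).card = 2) : ∃ f, IsProperListColoring (thetaGraph k) L f := by
  -- Lists beyond the last vertex are irrelevant, but are given two elements as well.
  obtain ⟨l, hl, rfl⟩ : ∃ l : ℕ → Finset ℕ, (∀ n, (l n).card = 2) ∧ L = fun v => l v.val := by
    refine ⟨fun n => if h : n < 2*k+3 then L ⟨n, h⟩ else {0, 1}, fun n => ?_, ?_⟩
    · by_cases h : n < 2*k+3
      · simp [h, hL]
      · simp [h]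
    · ext v
      simp
  obtain ⟨c, hc, d, hd, ⟨x, hx, hxc, hxd⟩, ⟨y, hy, hyc, hyd⟩, z, hz, hzd⟩ :=
    exists_pair (l 0) (l 1) (l 2) (l 3) (hl _) (hl _) (hl _) (hl _) (fun n => l (n + 3))
      (fun n => hl _) (2*k-1) (by omega)
  obtain ⟨g, g0, gn, gl, gne⟩ := exists_path _ c _ z hz
  refine ⟨_, (proper_iff k hk l (fun n => if n = 0 then c else if n = 1 then d else
    if n = 2 then x else if n = 3 then y else g (n - 3))).2 ?_⟩
  refine ⟨?_, by simpa using hxc.symm, by simpa using hxd, by simpa using hyc.symm,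
    by simpa using hyd, ?_, ?_, ?_⟩
  · intro n hn
    by_cases h4 : 4 ≤ n
    · have := gl (n - 3) (by omega) (by omega)
      rw [show n - 3 + 3 = n by omega] at this
      simpa [show n ≠ 0 by omega, show n ≠ 1 by omega, show n ≠ 2 by omega,
        show n ≠ 3 by omega] using this
    · interval_cases n <;> simpa
  · have := gne 0 (by omega)
    simpa [g0] using this
  · intro n h4 hn
    have := gne (n - 3) (by omega)
    rw [show n - 3 + 1 = n + 1 - 3 by omega] at this
    simpa [show n ≠ 0 by omega, show n ≠ 1 by omega, show n ≠ 2 by omega,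
        show n ≠ 3 by omega] using this
  · simp only [show 2*k+2 ≠ 0 by omega, show 2*k+2 ≠ 1 by omega, show 2*k+2 ≠ 2 by omega,
      show 2*k+2 ≠ 3 by omega, if_false, show 2*k+2-3 = 2*k-1 by omega, gn]
    simpa using hzd

/-! ### A 2-assignment with a single coloring -/

/-- A `2`-assignment of `Θ(2,2,2k)` (vertices `0, …, 2k+2`) with exactly one proper coloring. -/
def badList (k n : ℕ) : Finset ℕ :=
  if n = 1 ∨ n = 2*k+2 then {1, 3} else if n = 3 ∨ n = 2*k+1 then {2, 3} else {1, 2}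

/-- The only proper `badList`-coloring. -/
def badColoring (k n : ℕ) : ℕ :=
  if n = 1 ∨ n = 2*k+1 then 3 else if n = 2*k+2 ∨ n = 0 then 1 else
    if n = 3 then 2 else if n % 2 = 0 then 2 else 1

lemma badList_card (k n : ℕ) : (badList k n).card = 2 := by
  unfold badList
  split_ifs <;> rfl

lemma mem_badList (k n x : ℕ) : x ∈ badList k n ↔
    if n = 1 ∨ n = 2*k+2 then x = 1 ∨ x = 3 else if n = 3 ∨ n = 2*k+1 then x = 2 ∨ x = 3
      else x = 1 ∨ x = 2 := by
  unfold badList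
  split_ifs <;> simp

lemma numListColorings_badList (k : ℕ) (hk : 2 ≤ k) :
    numListColorings (thetaGraph k) (fun v => badList k v.val) = 1 := by
  rw [numListColorings, Nat.card_eq_one_iff_exists]
  have good : IsProperListColoring (thetaGraph k) (fun v => badList k v.val)
      (fun v => badColoring k v.val) := by
    rw [proper_iff k hk]
    unfold badColoring
    refine ⟨fun n hn => ?_, ?_, ?_, ?_, ?_, ?_, fun n h4 hn => ?_, ?_⟩
    · rw [mem_badList]
      split_ifs <;> omega
    all_goals split_ifs <;> grind
  refine ⟨⟨_, good⟩, ?_⟩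
  rintro ⟨f, hf⟩
  obtain ⟨g, rfl⟩ := exists_ext f
  rw [proper_iff k hk] at hf
  obtain ⟨hl, h02, h21, h03, h31, h04, hz, hlast⟩ := hf
  simp only [mem_badList] at hl
  have l0 := hl 0 (by omega)
  have l1 := hl 1 (by omega)
  have l2 := hl 2 (by omega)
  have l3 := hl 3 (by omega)
  have l4 := hl (2*k+1) (by omega)
  have l5 := hl (2*k+2) (by omega)
  rw [if_neg (by omega), if_neg (by omega)] at l0
  rw [if_pos (by omega)] at l1
  rw [if_neg (by omega), if_neg (by omega)] at l2
  rw [if_neg (by omega), if_pos (by omega)] at l3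
  rw [if_neg (by omega), if_pos (by omega)] at l4
  rw [if_pos (by omega)] at l5
  have g0 : g 0 = 1 := by omega
  have alt : ∀ n, 4 ≤ n → n ≤ 2*k → g n = if n % 2 = 0 then 2 else 1 := by
    intro n h4
    induction n, h4 using Nat.le_induction with
    | base =>
      intro _
      have := hl 4 (by omega)
      rw [if_neg (by omega), if_neg (by omega)] at this
      rw [if_pos (by omega)]
      omega
    | succ n h4 ih =>
      intro hn
      have := hl (n + 1) (by omega)
      rw [if_neg (by omega), if_neg (by omega)] at this
      have := ih (by omega)
      have := hz n h4 (by omega)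
      split_ifs at * <;> omega
  have e0 := alt (2*k) (by omega) le_rfl
  rw [if_pos (by omega)] at e0
  have z1 := hz (2*k) (by omega) (by omega)
  have z2 := hz (2*k+1) (by omega) (by omega)
  apply Subtype.ext
  funext v
  obtain ⟨n, hn⟩ := v
  show g n = badColoring k n
  unfold badColoring
  rw [show 2*k+1+1 = 2*k+2 by omega] at z2
  by_cases h4 : 4 ≤ n
  · by_cases h5 : n ≤ 2*k
    · rw [alt n h4 h5]
      split_ifs <;> omega
    · obtain rfl | rfl : n = 2*k+1 ∨ n = 2*k+2 := by omega
      all_goals split_ifs <;> grind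
  · interval_cases n <;> split_ifs <;> grind

/-! ### Colorings with two colors -/

/-- The proper coloring of `Θ(2,2,2k)` with colors `1, 2` that gives the end vertex `0` the
color `1`. -/
def twoColoring (n : ℕ) : ℕ :=
  if n = 0 ∨ n = 1 then 1 else if n = 3 then 2 else if n % 2 = 0 then 2 else 1

lemma twoColoring_proper (k : ℕ) (hk : 2 ≤ k) :
    IsProperListColoring (thetaGraph k) (fun _ => Finset.Icc 1 2) (fun v => twoColoring v.val) := by
  rw [proper_iff k hk (fun _ => Finset.Icc 1 2)]
  unfold twoColoring
  refine ⟨fun n hn => ?_, ?_, ?_, ?_, ?_, ?_, fun n h4 hn => ?_, ?_⟩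
  · rw [Finset.mem_Icc]
    split_ifs <;> omega
  all_goals split_ifs <;> grind

lemma chromPoly_theta (k : ℕ) (hk : 2 ≤ k) : chromPoly (thetaGraph k) 2 = 2 := by
  rw [chromPoly, numListColorings, Nat.card_eq_two_iff]
  have hP := proper_iff k hk (fun _ => Finset.Icc 1 2)
  have good1 := twoColoring_proper k hk
  have good2 : IsProperListColoring (thetaGraph k) (fun _ => Finset.Icc 1 2)
      (fun v => (fun n => 3 - twoColoring n) v.val) := by
    have range : ∀ n, twoColoring n = 1 ∨ twoColoring n = 2 := by
      intro n
      unfold twoColoring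
      split_ifs <;> omega
    have swap : ∀ m n, twoColoring m ≠ twoColoring n →
        3 - twoColoring m ≠ 3 - twoColoring n := by
      intro m n
      have := range m
      have := range n
      omega
    obtain ⟨-, h02, h21, h03, h31, h04, hz, hlast⟩ := (hP _).1 good1
    refine (hP (fun n => 3 - twoColoring n)).2 ⟨fun n _ => ?_, swap _ _ h02, swap _ _ h21,
      swap _ _ h03, swap _ _ h31, swap _ _ h04, fun n h4 hn => swap _ _ (hz n h4 hn),
      swap _ _ hlast⟩
    have := range n
    rw [Finset.mem_Icc]
    omega
  refine ⟨⟨_, good1⟩, ⟨_, good2⟩, ?_, ?_⟩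
  · intro h
    have := congrFun (Subtype.ext_iff.1 h) ⟨0, by omega⟩
    simp [twoColoring] at this
  · rw [Set.eq_univ_iff_forall]
    rintro ⟨f, hf⟩
    obtain ⟨g, rfl⟩ := exists_ext f
    rw [hP] at hf
    obtain ⟨hl, h02, h21, h03, h31, h04, hz, hlast⟩ := hf
    simp only [Finset.mem_Icc] at hl
    have l0 := hl 0 (by omega)
    have l1 := hl 1 (by omega)
    have l2 := hl 2 (by omega)
    have l3 := hl 3 (by omega)
    have l4 := hl 4 (by omega)
    have alt : ∀ n, 4 ≤ n → n < 2*k+3 → g n = if n % 2 = 0 then 3 - g 0 else g 0 := by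
      intro n h4
      induction n, h4 using Nat.le_induction with
      | base =>
        intro _
        rw [if_pos (by omega)]
        omega
      | succ n h4 ih =>
        intro hn
        have := hl (n + 1) (by omega)
        have := ih (by omega)
        have := hz n h4 (by omega)
        split_ifs at * <;> omega
    have h0 : g 0 = 1 ∨ g 0 = 2 := by omega
    rw [Set.mem_insert_iff, Set.mem_singleton_iff, Subtype.mk.injEq, Subtype.mk.injEq]
    refine h0.imp (fun h0 => ?_) (fun h0 => ?_)
    all_goals
      funext v
      obtain ⟨n, hn⟩ := v
      first | change g n = twoColoring n | change g n = 3 - twoColoring n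
      unfold twoColoring
      by_cases h4 : 4 ≤ n
      · rw [alt n h4 hn]
        split_ifs <;> omega
      · interval_cases n <;> split_ifs <;> grind

lemma theta_adj (k : ℕ) :
    (thetaGraph k).Adj ⟨0, by omega⟩ ⟨2, by omega⟩ := by
  rw [thetaGraph, SimpleGraph.fromRel_adj]
  exact ⟨by simp, by simp⟩

lemma theta_chromaticNumber (k : ℕ) (hk : 2 ≤ k) : (thetaGraph k).chromaticNumber = 2 := by
  apply le_antisymm
  · have hpos : chromPoly (thetaGraph k) 2 ≠ 0 := by rw [chromPoly_theta k hk]; omega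
    obtain ⟨⟨f, hf1, hf2⟩⟩ := (Nat.card_ne_zero.1 hpos).1
    have : (thetaGraph k).Colorable 2 := by
      refine ⟨SimpleGraph.Coloring.mk (fun v => (⟨f v - 1, ?_⟩ : Fin 2)) ?_⟩
      · have := Finset.mem_Icc.1 (hf1 v)
        omega
      · intro v w hvw h
        have := hf2 hvw
        have := Finset.mem_Icc.1 (hf1 v)
        have := Finset.mem_Icc.1 (hf1 w)
        have := Fin.mk.inj_iff.1 h
        omega
    exact this.chromaticNumber_le
  · exact SimpleGraph.two_le_chromaticNumber_of_adj (theta_adj k)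

lemma finite_colorings {V : Type*} [Finite V] (G : SimpleGraph V) (L : V → Finset ℕ) :
    Finite {f : V → ℕ // IsProperListColoring G L f} :=
  Finite.of_injective (β := ∀ v, L v) (fun f v => ⟨f.1 v, f.2.1 v⟩) fun _ _ h =>
    Subtype.ext (funext fun v => congrArg Subtype.val (congrFun h v))

/-- For each `k ≥ 2`, the graph `Θ(2,2,2k)` satisfies `χ_ℓ = χ = 2` (it is
chromatic-choosable), yet `P_ℓ(Θ(2,2,2k),2) = 1 < 2 = P(Θ(2,2,2k),2)`; in particular
it is not weakly enumeratively chromatic-choosable. -/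
theorem theta222k_chromatic_choosable_not_weakly_enumerative (k : ℕ) (hk : 2 ≤ k) :
    listChromNum (thetaGraph k) = 2 ∧ (thetaGraph k).chromaticNumber = 2 ∧
    listColorFn (thetaGraph k) 2 = 1 ∧ chromPoly (thetaGraph k) 2 = 2 := by
  refine ⟨?_, theta_chromaticNumber k hk, ?_, chromPoly_theta k hk⟩
  · refine IsLeast.csInf_eq ⟨theta_choosable k hk, fun m hm => ?_⟩
    by_contra! hlt
    -- With the lists `{0, …, m-1}` and `m ≤ 1`, adjacent vertices cannot get different colors.
    obtain ⟨f, hf1, hf2⟩ := hm (fun _ => Finset.range m) (fun _ => Finset.card_range m)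
    have h0 := Finset.mem_range.1 (hf1 ⟨0, by omega⟩)
    have h2 := Finset.mem_range.1 (hf1 ⟨2, by omega⟩)
    have := hf2 (theta_adj k)
    omega
  · refine IsLeast.csInf_eq ⟨⟨_, fun v => badList_card k v.val, numListColorings_badList k hk⟩, ?_⟩
    rintro n ⟨L, hL, rfl⟩
    obtain ⟨f, hf⟩ := theta_choosable k hk L hL
    have := finite_colorings (thetaGraph k) L
    have : Nonempty {f // IsProperListColoring (thetaGraph k) L f} := ⟨⟨f, hf⟩⟩
    exact Nat.card_pos
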